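/- arXiv:2405.17753 — 2 statements merged into one kernel-verified Lean document; each statement's English description precedes it below -/
import Mathlib

section
/- Symmetry principle: let F : ℝ^k → ℝ^k be continuously differentiable and suppose that for every x ∈ ℝ^k the Jacobian matrix DF(x) is symmetric. Then the scalar function f(x) := ∫₀¹ ⟨F(t·x), x⟩ dt is differentiable on ℝ^k and ∇f(x) = F(x) for all x; i.e., F is a gradient map. -/
open RealInnerProductSpace intervalIntegral

/-!
Symmetry of the derivative of `F` says exactly that the `1`-form `ω x = ⟪F x, ·⟫` is closed. By the
Poincaré lemma on convex sets, its integral along the segment from a base point `a` to `y` is, as a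
function of `y`, a primitive of `ω`; a primitive of `ω` is a function with gradient `F`.
-/

section NormedSpace

variable {𝕜 E G : Type*} [RCLike 𝕜]
  [NormedAddCommGroup E] [NormedSpace ℝ E] [NormedSpace 𝕜 E]
  [NormedAddCommGroup G] [NormedSpace ℝ G] [NormedSpace 𝕜 G] [CompleteSpace G]
  {s : Set E} {a b : E} {ω : E → E →L[𝕜] G} {ω' : E → E →L[ℝ] E →L[𝕜] G}

theorem hasFDerivWithinAt_integral_lineMap_of_symmetric (hs : Convex ℝ s)
    (hω : ∀ x ∈ s, HasFDerivWithinAt ω (ω' x) s x)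
    (hsymm : ∀ x ∈ s, ∀ u ∈ tangentConeAt ℝ s x, ∀ v ∈ tangentConeAt ℝ s x, ω' x u v = ω' x v u)
    (ha : a ∈ s) (hb : b ∈ s) :
    HasFDerivWithinAt (fun y ↦ ∫ t in (0 : ℝ)..1, ω (AffineMap.lineMap a y t) (y - a))
      (ω b) s b := by
  simpa only [curveIntegral_segment] using
    hs.hasFDerivWithinAt_curveIntegral_segment_of_hasFDerivWithinAt_symmetric hω hsymm ha hb

end NormedSpace

section InnerProductSpace

variable {E : Type*} [NormedAddCommGroup E] [InnerProductSpace ℝ E] [CompleteSpace E]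
  {F : E → E}

theorem hasGradientWithinAt_integral_inner_lineMap_of_symmetric
    {s : Set E} {a b : E} {F' : E → E →L[ℝ] E}
    (hs : Convex ℝ s) (hF : ∀ x ∈ s, HasFDerivWithinAt F (F' x) s x)
    (hsymm : ∀ x ∈ s, ∀ u ∈ tangentConeAt ℝ s x, ∀ v ∈ tangentConeAt ℝ s x,
      ⟪F' x u, v⟫ = ⟪F' x v, u⟫)
    (ha : a ∈ s) (hb : b ∈ s) :
    HasGradientWithinAt
      (fun y ↦ ∫ t in (0 : ℝ)..1, ⟪F (AffineMap.lineMap a y t), y - a⟫) (F b) s b := by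
  have hω : ∀ x ∈ s, HasFDerivWithinAt (fun y ↦ innerSL ℝ (F y)) (innerSL ℝ ∘L F' x) s x :=
    fun x hx ↦ (innerSL ℝ).hasFDerivAt.comp_hasFDerivWithinAt x (hF x hx)
  exact hasFDerivWithinAt_integral_lineMap_of_symmetric hs hω hsymm ha hb

theorem gradient_map_of_symmetric_jacobian_general (hF : Differentiable ℝ F)
    (hsymm : ∀ x u v, ⟪fderiv ℝ F x u, v⟫ = ⟪fderiv ℝ F x v, u⟫) (x : E) :
    HasGradientAt (fun y ↦ ∫ t in (0 : ℝ)..1, ⟪F (t • y), y⟫) (F x) x := by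
  have h := hasGradientWithinAt_integral_inner_lineMap_of_symmetric convex_univ
    (fun y _ ↦ (hF y).hasFDerivAt.hasFDerivWithinAt) (fun y _ u _ v _ ↦ hsymm y u v)
    (Set.mem_univ 0) (Set.mem_univ x)
  simpa only [hasGradientWithinAt_univ, AffineMap.lineMap_apply_module, smul_zero, zero_add,
    sub_zero] using h

end InnerProductSpace

/-- Symmetry principle: if `F : ℝ^k → ℝ^k` is continuously differentiable with
symmetric Jacobian everywhere, then `f(x) = ∫₀¹ ⟨F(t•x), x⟩ dt` is
differentiable with gradient `F`; i.e. `F` is a gradient map. -/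
theorem gradient_map_of_symmetric_jacobian (k : ℕ)
    (F : EuclideanSpace ℝ (Fin k) → EuclideanSpace ℝ (Fin k))
    (hF : ContDiff ℝ 1 F)
    (hsymm : ∀ x u v, ⟪fderiv ℝ F x u, v⟫ = ⟪fderiv ℝ F x v, u⟫) :
    ∀ x, HasGradientAt
      (fun y : EuclideanSpace ℝ (Fin k) => ∫ t in (0:ℝ)..1, ⟪F (t • y), y⟫)
      (F x) x :=
  gradient_map_of_symmetric_jacobian_general (hF.differentiable one_ne_zero) hsymm
end

section
/- Existence of regression equilibrium: in the market model with C and S symmetric positive semidefinite and every γⱼ ≥ 0, if the feasible set K is nonempty, then the variational inequality VI(K, ∇f) has a solution; that is, there exists (Θ*, G*, L*) ∈ K such that ⟨∇f(Θ*,G*,L*), (Θ,G,L) − (Θ*,G*,L*)⟩ ≥ 0 for all (Θ,G,L) ∈ K. -/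
open Matrix

/-- Decision variables of the market model: a regression profile `Θ` and, for
each sample `i`, vectors `pᵢ`, `rᵢ⁺`, `rᵢ⁻`, `ℓᵢ`. -/
abbrev MarketPoint (nb n m : ℕ) :=
  (Fin nb → Fin m → ℝ) × (Fin n → Fin nb → ℝ) × (Fin n → Fin nb → ℝ) ×
    (Fin n → Fin nb → ℝ) × (Fin n → Fin nb → ℝ)

/-- The market objective `f`. -/
noncomputable def marketObj (nb n m : ℕ) (C S : Matrix (Fin nb) (Fin nb) ℝ)
    (γ : Fin nb → ℝ) (c cplus cminus s : Fin nb → ℝ)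
    (φ : Fin n → Fin m → ℝ) (w : Fin n → Fin nb → ℝ) :
    MarketPoint nb n m → ℝ :=
  fun x =>
    match x with
    | (Θ, p, rp, rm, ℓ) =>
      (1 / (n : ℝ)) * ∑ i, (
        ((Matrix.of Θ).mulVec (φ i) - w i) ⬝ᵥ
          (Matrix.diagonal γ).mulVec ((Matrix.of Θ).mulVec (φ i) - w i) +
        (p i + rp i - rm i) ⬝ᵥ C.mulVec (p i + rp i - rm i) +
        c ⬝ᵥ p i + cplus ⬝ᵥ rp i - cminus ⬝ᵥ rm i +
        ℓ i ⬝ᵥ S.mulVec (ℓ i) + s ⬝ᵥ ℓ i)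

/-- The feasible set `K` of the market model. -/
def marketFeas (nb n m nl : ℕ) (d plow pup : Fin nb → ℝ)
    (Fptdf : Matrix (Fin nl) (Fin nb) ℝ) (fbar : Fin nl → ℝ)
    (φ : Fin n → Fin m → ℝ) (w : Fin n → Fin nb → ℝ) (τ : Fin nb → ℝ) :
    Set (MarketPoint nb n m) :=
  { x | match x with
    | (Θ, p, rp, rm, ℓ) =>
      (∀ i, ∑ j, (p i j + (Matrix.of Θ).mulVec (φ i) j - d j) = 0) ∧
      (∀ i, ∑ j, (rp i j - rm i j - (Matrix.of Θ).mulVec (φ i) j + w i j + ℓ i j) = 0) ∧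
      (∀ i, ∀ l, |Fptdf.mulVec (p i + (Matrix.of Θ).mulVec (φ i) - d) l| ≤ fbar l) ∧
      (∀ i, ∀ l, |Fptdf.mulVec (p i + (Matrix.of Θ).mulVec (φ i) - d) l +
        Fptdf.mulVec (rp i - rm i - (Matrix.of Θ).mulVec (φ i) + w i + ℓ i) l| ≤ fbar l) ∧
      (∀ i, plow ≤ p i + rp i - rm i ∧ p i + rp i - rm i ≤ pup) ∧
      (∀ i, 0 ≤ rp i ∧ rp i ≤ pup - p i) ∧
      (∀ i, 0 ≤ rm i ∧ rm i ≤ p i - plow) ∧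
      (∀ i, 0 ≤ ℓ i ∧ ℓ i ≤ d) ∧
      (∀ j, ∑ jm, |Θ j jm| ≤ τ j) }

/-! The feasible set is convex and closed, being cut out by affine equations, affine inequalities
and `ℓ¹` balls, and it is bounded because the reserve, output and shedding limits and the `ℓ¹` radii
confine every coordinate to a bounded interval. Hence the objective attains its minimum there, and
by convexity of the feasible set the first-order condition at a minimizer is the variational
inequality. -/

section VariationalInequality

/-- `x` solves the variational inequality VI(K, F). The operator `F` takes values in the dual space,
so that `∇f` is represented by `fderiv ℝ f` and no inner product is needed. -/
def SolvesVI {E : Type*} [AddCommGroup E] [Module ℝ E] [TopologicalSpace E] (K : Set E)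
    (F : E → StrongDual ℝ E) (x : E) : Prop :=
  x ∈ K ∧ ∀ y ∈ K, 0 ≤ F x (y - x)

variable {E : Type*} [NormedAddCommGroup E] [NormedSpace ℝ E] {K : Set E} {f : E → ℝ}

theorem SolvesVI.of_isLocalMinOn {x : E} (hx : x ∈ K) (hK : StarConvex ℝ x K)
    (hmin : IsLocalMinOn f K x) (hf : DifferentiableAt ℝ f x) : SolvesVI K (fderiv ℝ f) x :=
  ⟨hx, fun _ hy => hmin.hasFDerivWithinAt_nonneg hf.hasFDerivAt.hasFDerivWithinAt
    (sub_mem_posTangentConeAt_of_segment_subset (hK.segment_subset hy))⟩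

theorem exists_solvesVI_fderiv (hcompact : IsCompact K) (hconvex : Convex ℝ K)
    (hne : K.Nonempty) (hf : ∀ x ∈ K, DifferentiableAt ℝ f x) :
    ∃ x, SolvesVI K (fderiv ℝ f) x := by
  have hcont : ContinuousOn f K := fun x hx => (hf x hx).continuousAt.continuousWithinAt
  obtain ⟨x, hx, hmin⟩ := hcompact.exists_isMinOn hne hcont
  exact ⟨x, .of_isLocalMinOn hx (hconvex.starConvex hx) hmin.localize (hf x hx)⟩

end VariationalInequality

section ConstraintSets

variable {ι κ : Type*} [Fintype ι]

variable (ι) in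
/-- The injections `v` that balance over the network, `1ᵀv = 0`. -/
def balancedInjections : Submodule ℝ (ι → ℝ) :=
  LinearMap.ker (∑ j, LinearMap.proj j : (ι → ℝ) →ₗ[ℝ] ℝ)

theorem mem_balancedInjections {v : ι → ℝ} : v ∈ balancedInjections ι ↔ ∑ j, v j = 0 := by
  simp [balancedInjections]

/-- The injections `v` whose line flows `F v` obey the limits `|F v| ≤ b`. -/
def flowPolytope (F : Matrix κ ι ℝ) (b : κ → ℝ) : Set (ι → ℝ) :=
  F.mulVecLin ⁻¹' Set.Icc (-b) b

theorem mem_flowPolytope {F : Matrix κ ι ℝ} {b : κ → ℝ} {v : ι → ℝ} :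
    v ∈ flowPolytope F b ↔ ∀ l, |(F *ᵥ v) l| ≤ b l := by
  simp [flowPolytope, Pi.le_def, abs_le, forall_and]

theorem convex_flowPolytope (F : Matrix κ ι ℝ) (b : κ → ℝ) : Convex ℝ (flowPolytope F b) :=
  (convex_Icc _ _).linear_preimage _

theorem isClosed_flowPolytope (F : Matrix κ ι ℝ) (b : κ → ℝ) : IsClosed (flowPolytope F b) :=
  isClosed_Icc.preimage F.mulVecLin.continuous_of_finiteDimensional

/-- The profiles `Θ` whose rows satisfy `‖θⱼ‖₁ ≤ τⱼ`. -/
def rowL1Ball (τ : κ → ℝ) : Set (κ → ι → ℝ) :=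
  {Θ | ∀ j, ∑ k, |Θ j k| ≤ τ j}

theorem convex_rowL1Ball (τ : κ → ℝ) : Convex ℝ (rowL1Ball τ : Set (κ → ι → ℝ)) := by
  intro Θ hΘ Θ' hΘ' a b ha hb hab j
  calc ∑ k, |a * Θ j k + b * Θ' j k|
      ≤ ∑ k, (a * |Θ j k| + b * |Θ' j k|) := by
        gcongr with k
        simpa only [abs_mul, abs_of_nonneg ha, abs_of_nonneg hb]
          using abs_add_le (a * Θ j k) (b * Θ' j k)
    _ = a * ∑ k, |Θ j k| + b * ∑ k, |Θ' j k| := by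
        rw [Finset.sum_add_distrib, Finset.mul_sum, Finset.mul_sum]
    _ ≤ a * τ j + b * τ j := by
        gcongr
        exacts [hΘ j, hΘ' j]
    _ = τ j := by rw [← add_mul, hab, one_mul]

theorem isClosed_rowL1Ball (τ : κ → ℝ) : IsClosed (rowL1Ball τ : Set (κ → ι → ℝ)) := by
  simp only [rowL1Ball, Set.ofPred_forall]
  exact isClosed_iInter fun j => isClosed_le (by fun_prop) continuous_const

theorem abs_le_of_mem_rowL1Ball {τ : κ → ℝ} {Θ : κ → ι → ℝ} (hΘ : Θ ∈ rowL1Ball τ) (j : κ)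
    (k : ι) : |Θ j k| ≤ τ j :=
  (Finset.single_le_sum (fun k _ => abs_nonneg (Θ j k)) (Finset.mem_univ k)).trans (hΘ j)

end ConstraintSets

namespace MarketPoint

variable {nb n m nl : ℕ}

/-- The generation `pᵢ` in sample `i`. -/
def generation (i : Fin n) : MarketPoint nb n m →ₗ[ℝ] (Fin nb → ℝ) where
  toFun x := x.2.1 i
  map_add' _ _ := rfl
  map_smul' _ _ := rfl

/-- The upward reserve `rᵢ⁺` in sample `i`. -/
def upReserve (i : Fin n) : MarketPoint nb n m →ₗ[ℝ] (Fin nb → ℝ) where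
  toFun x := x.2.2.1 i
  map_add' _ _ := rfl
  map_smul' _ _ := rfl

/-- The downward reserve `rᵢ⁻` in sample `i`. -/
def downReserve (i : Fin n) : MarketPoint nb n m →ₗ[ℝ] (Fin nb → ℝ) where
  toFun x := x.2.2.2.1 i
  map_add' _ _ := rfl
  map_smul' _ _ := rfl

/-- The load shedding `ℓᵢ` in sample `i`. -/
def shedding (i : Fin n) : MarketPoint nb n m →ₗ[ℝ] (Fin nb → ℝ) where
  toFun x := x.2.2.2.2 i
  map_add' _ _ := rfl
  map_smul' _ _ := rfl

/-- The wind forecast `Θv` for the feature vector `v`. -/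
def forecast (v : Fin m → ℝ) : MarketPoint nb n m →ₗ[ℝ] (Fin nb → ℝ) where
  toFun x := Matrix.of x.1 *ᵥ v
  map_add' x y := Matrix.add_mulVec (Matrix.of x.1) (Matrix.of y.1) v
  map_smul' a x := Matrix.smul_mulVec a (Matrix.of x.1) v

/-- The redispatched generation `pᵢ + rᵢ⁺ - rᵢ⁻` in sample `i`. -/
def redispatch (i : Fin n) : MarketPoint nb n m →ₗ[ℝ] (Fin nb → ℝ) :=
  generation i + upReserve i - downReserve i

/-- The generation `pᵢ + rᵢ⁺` after full activation of the upward reserve. -/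
def maxRedispatch (i : Fin n) : MarketPoint nb n m →ₗ[ℝ] (Fin nb → ℝ) :=
  generation i + upReserve i

/-- The generation `pᵢ - rᵢ⁻` after full activation of the downward reserve. -/
def minRedispatch (i : Fin n) : MarketPoint nb n m →ₗ[ℝ] (Fin nb → ℝ) :=
  generation i - downReserve i

/-- The day-ahead nodal injection `pᵢ + Θv - d`. -/
def dayAheadInjection (d : Fin nb → ℝ) (v : Fin m → ℝ) (i : Fin n) :
    MarketPoint nb n m →ᵃ[ℝ] (Fin nb → ℝ) :=
  (generation i + forecast v).toAffineMap - AffineMap.const ℝ _ d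

/-- The real-time change `rᵢ⁺ - rᵢ⁻ - Θv + u + ℓᵢ` of the nodal injection, where `u` is the realized
wind. -/
def realTimeAdjustment (v : Fin m → ℝ) (u : Fin nb → ℝ) (i : Fin n) :
    MarketPoint nb n m →ᵃ[ℝ] (Fin nb → ℝ) :=
  (upReserve i - downReserve i - forecast v).toAffineMap + AffineMap.const ℝ _ u +
    (shedding i).toAffineMap

/-- The real-time nodal injection: the day-ahead injection plus its real-time adjustment. -/
def realTimeInjection (d : Fin nb → ℝ) (v : Fin m → ℝ) (u : Fin nb → ℝ) (i : Fin n) :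
    MarketPoint nb n m →ᵃ[ℝ] (Fin nb → ℝ) :=
  dayAheadInjection d v i + realTimeAdjustment v u i

/-- The constraints of sample `i`, with feature vector `v` and realized wind `u`. The reserve
capacities are rearranged to `pᵢ + rᵢ⁺ ≤ p̄` and `p̲ ≤ pᵢ - rᵢ⁻`. -/
def sampleFeas (d plow pup : Fin nb → ℝ) (F : Matrix (Fin nl) (Fin nb) ℝ) (b : Fin nl → ℝ)
    (v : Fin m → ℝ) (u : Fin nb → ℝ) (i : Fin n) : Set (MarketPoint nb n m) :=
  dayAheadInjection d v i ⁻¹' balancedInjections (Fin nb) ∩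
  realTimeAdjustment v u i ⁻¹' balancedInjections (Fin nb) ∩
  dayAheadInjection d v i ⁻¹' flowPolytope F b ∩
  realTimeInjection d v u i ⁻¹' flowPolytope F b ∩
  redispatch i ⁻¹' Set.Icc plow pup ∩
  (upReserve i ⁻¹' Set.Ici 0 ∩ maxRedispatch i ⁻¹' Set.Iic pup) ∩
  (downReserve i ⁻¹' Set.Ici 0 ∩ minRedispatch i ⁻¹' Set.Ici plow) ∩
  shedding i ⁻¹' Set.Icc 0 d

variable (d plow pup : Fin nb → ℝ) (F : Matrix (Fin nl) (Fin nb) ℝ) (b : Fin nl → ℝ)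

theorem convex_sampleFeas (v : Fin m → ℝ) (u : Fin nb → ℝ) (i : Fin n) :
    Convex ℝ (sampleFeas d plow pup F b v u i) :=
  have hB := (balancedInjections (Fin nb)).convex
  have hF := convex_flowPolytope F b
  (hB.affine_preimage _).inter (hB.affine_preimage _)
    |>.inter (hF.affine_preimage _)
    |>.inter (hF.affine_preimage _)
    |>.inter ((convex_Icc plow pup).linear_preimage _)
    |>.inter (((convex_Ici 0).linear_preimage _).inter ((convex_Iic pup).linear_preimage _))
    |>.inter (((convex_Ici 0).linear_preimage _).inter ((convex_Ici plow).linear_preimage _))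
    |>.inter ((convex_Icc 0 d).linear_preimage _)

theorem isClosed_sampleFeas (v : Fin m → ℝ) (u : Fin nb → ℝ) (i : Fin n) :
    IsClosed (sampleFeas d plow pup F b v u i) :=
  have hB := (balancedInjections (Fin nb)).closed_of_finiteDimensional
  have hF := isClosed_flowPolytope F b
  have hlin (L : MarketPoint nb n m →ₗ[ℝ] (Fin nb → ℝ)) : Continuous L :=
    L.continuous_of_finiteDimensional
  have haff (A : MarketPoint nb n m →ᵃ[ℝ] (Fin nb → ℝ)) : Continuous A :=
    A.continuous_of_finiteDimensional
  (hB.preimage (haff _)).inter (hB.preimage (haff _))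
    |>.inter (hF.preimage (haff _))
    |>.inter (hF.preimage (haff _))
    |>.inter (isClosed_Icc.preimage (hlin _))
    |>.inter ((isClosed_Ici.preimage (hlin _)).inter (isClosed_Iic.preimage (hlin _)))
    |>.inter ((isClosed_Ici.preimage (hlin _)).inter (isClosed_Ici.preimage (hlin _)))
    |>.inter (isClosed_Icc.preimage (hlin _))

variable {d plow pup F b}

theorem mem_sampleFeas {v : Fin m → ℝ} {u : Fin nb → ℝ} {i : Fin n} {Θ : Fin nb → Fin m → ℝ}
    {p rp rm ℓ : Fin n → Fin nb → ℝ} :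
    (Θ, p, rp, rm, ℓ) ∈ sampleFeas d plow pup F b v u i ↔
      ∑ j, (p i j + (Matrix.of Θ *ᵥ v) j - d j) = 0 ∧
      ∑ j, (rp i j - rm i j - (Matrix.of Θ *ᵥ v) j + u j + ℓ i j) = 0 ∧
      (∀ l, |(F *ᵥ (p i + Matrix.of Θ *ᵥ v - d)) l| ≤ b l) ∧
      (∀ l, |(F *ᵥ (p i + Matrix.of Θ *ᵥ v - d)) l +
        (F *ᵥ (rp i - rm i - Matrix.of Θ *ᵥ v + u + ℓ i)) l| ≤ b l) ∧
      (plow ≤ p i + rp i - rm i ∧ p i + rp i - rm i ≤ pup) ∧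
      (0 ≤ rp i ∧ rp i ≤ pup - p i) ∧
      (0 ≤ rm i ∧ rm i ≤ p i - plow) ∧
      (0 ≤ ℓ i ∧ ℓ i ≤ d) := by
  simp only [← Pi.add_apply (F *ᵥ _), ← Matrix.mulVec_add]
  rw [le_sub_iff_add_le' (b := rp i), le_sub_comm (a := rm i)]
  simp only [sampleFeas, Set.mem_inter_iff, Set.mem_preimage, SetLike.mem_coe,
    mem_balancedInjections, mem_flowPolytope, Set.mem_Icc, and_assoc]
  rfl

theorem generation_mem_Icc_of_mem_sampleFeas {v : Fin m → ℝ} {u : Fin nb → ℝ} {i : Fin n}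
    {x : MarketPoint nb n m} (hx : x ∈ sampleFeas d plow pup F b v u i) :
    generation i x ∈ Set.Icc plow pup := by
  obtain ⟨⟨⟨-, hup, hup'⟩, hdown, hdown'⟩, -⟩ := hx
  exact ⟨le_trans hdown' (sub_le_self _ hdown), le_trans (le_add_of_nonneg_right hup) hup'⟩

theorem upReserve_mem_Icc_of_mem_sampleFeas {v : Fin m → ℝ} {u : Fin nb → ℝ} {i : Fin n}
    {x : MarketPoint nb n m} (hx : x ∈ sampleFeas d plow pup F b v u i) :
    upReserve i x ∈ Set.Icc 0 (pup - plow) := by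
  have hgen := (generation_mem_Icc_of_mem_sampleFeas hx).1
  obtain ⟨⟨⟨-, hup, hup'⟩, -⟩, -⟩ := hx
  exact ⟨hup, (le_sub_iff_add_le'.2 hup').trans (sub_le_sub_left hgen _)⟩

theorem downReserve_mem_Icc_of_mem_sampleFeas {v : Fin m → ℝ} {u : Fin nb → ℝ} {i : Fin n}
    {x : MarketPoint nb n m} (hx : x ∈ sampleFeas d plow pup F b v u i) :
    downReserve i x ∈ Set.Icc 0 (pup - plow) := by
  have hgen := (generation_mem_Icc_of_mem_sampleFeas hx).2
  obtain ⟨⟨-, hdown, hdown'⟩, -⟩ := hx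
  exact ⟨hdown, (le_sub_comm.1 hdown').trans (sub_le_sub_right hgen _)⟩

end MarketPoint

section Market

open MarketPoint

variable {nb n m nl : ℕ} (C S : Matrix (Fin nb) (Fin nb) ℝ)
  (γ c cplus cminus s d plow pup : Fin nb → ℝ) (Fptdf : Matrix (Fin nl) (Fin nb) ℝ)
  (fbar : Fin nl → ℝ) (φ : Fin n → Fin m → ℝ) (w : Fin n → Fin nb → ℝ) (τ : Fin nb → ℝ)

theorem differentiable_marketObj :
    Differentiable ℝ (marketObj nb n m C S γ c cplus cminus s φ w) := by
  unfold marketObj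
  simp only [Matrix.mulVec, dotProduct, Matrix.of_apply, Pi.sub_apply, Pi.add_apply]
  fun_prop

theorem marketFeas_eq_iInter_inter :
    marketFeas nb n m nl d plow pup Fptdf fbar φ w τ =
      (⋂ i, sampleFeas d plow pup Fptdf fbar (φ i) (w i) i) ∩
        LinearMap.fst ℝ _ _ ⁻¹' rowL1Ball τ := by
  ext ⟨Θ, p, rp, rm, ℓ⟩
  simp only [marketFeas, Set.mem_ofPred_eq, Set.mem_inter_iff, Set.mem_iInter, mem_sampleFeas,
    forall_and, and_assoc]
  rfl

theorem convex_marketFeas : Convex ℝ (marketFeas nb n m nl d plow pup Fptdf fbar φ w τ) := by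
  rw [marketFeas_eq_iInter_inter]
  exact (convex_iInter fun i => convex_sampleFeas ..).inter
    ((convex_rowL1Ball τ).linear_preimage _)

theorem isClosed_marketFeas : IsClosed (marketFeas nb n m nl d plow pup Fptdf fbar φ w τ) := by
  rw [marketFeas_eq_iInter_inter]
  exact (isClosed_iInter fun i => isClosed_sampleFeas ..).inter
    ((isClosed_rowL1Ball τ).preimage continuous_fst)

theorem marketFeas_subset_Icc :
    marketFeas nb n m nl d plow pup Fptdf fbar φ w τ ⊆
      Set.Icc (fun j _ => -τ j, fun _ => plow, 0, 0, 0)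
        (fun j _ => τ j, fun _ => pup, fun _ => pup - plow, fun _ => pup - plow, fun _ => d) := by
  rw [marketFeas_eq_iInter_inter]
  rintro x ⟨hx, hΘ⟩
  rw [Set.mem_iInter] at hx
  have hrow j k := abs_le.1 (abs_le_of_mem_rowL1Ball hΘ j k)
  have hgen i := generation_mem_Icc_of_mem_sampleFeas (hx i)
  have hup i := upReserve_mem_Icc_of_mem_sampleFeas (hx i)
  have hdown i := downReserve_mem_Icc_of_mem_sampleFeas (hx i)
  have hshed i : shedding i x ∈ Set.Icc 0 d := (hx i).2
  exact ⟨⟨fun j k => (hrow j k).1, fun i => (hgen i).1, fun i => (hup i).1, fun i => (hdown i).1,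
      fun i => (hshed i).1⟩,
    ⟨fun j k => (hrow j k).2, fun i => (hgen i).2, fun i => (hup i).2, fun i => (hdown i).2,
      fun i => (hshed i).2⟩⟩

theorem isCompact_marketFeas : IsCompact (marketFeas nb n m nl d plow pup Fptdf fbar φ w τ) :=
  isCompact_Icc.of_isClosed_subset (isClosed_marketFeas ..) (marketFeas_subset_Icc ..)

theorem regression_equilibrium_exists_general
    (hne : (marketFeas nb n m nl d plow pup Fptdf fbar φ w τ).Nonempty) :
    ∃ xstar, SolvesVI (marketFeas nb n m nl d plow pup Fptdf fbar φ w τ)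
      (fderiv ℝ (marketObj nb n m C S γ c cplus cminus s φ w)) xstar :=
  exists_solvesVI_fderiv (isCompact_marketFeas ..) (convex_marketFeas ..) hne
    fun x _ => differentiable_marketObj C S γ c cplus cminus s φ w x

end Market

/-- Existence of regression equilibrium: if `C`, `S` are symmetric positive
semidefinite, all `γⱼ ≥ 0`, and the feasible set `K` is nonempty, then the
variational inequality VI(K, ∇f) has a solution: there is `x* ∈ K` with
`⟨∇f(x*), x − x*⟩ = Df(x*)[x − x*] ≥ 0` for all `x ∈ K`. -/
theorem regression_equilibrium_exists (nb n m nl : ℕ)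
    (C S : Matrix (Fin nb) (Fin nb) ℝ) (hC : C.PosSemidef) (hS : S.PosSemidef)
    (γ : Fin nb → ℝ) (hγ : ∀ j, 0 ≤ γ j)
    (c cplus cminus s d plow pup : Fin nb → ℝ) (hp : plow ≤ pup)
    (Fptdf : Matrix (Fin nl) (Fin nb) ℝ) (fbar : Fin nl → ℝ)
    (φ : Fin n → Fin m → ℝ) (w : Fin n → Fin nb → ℝ)
    (τ : Fin nb → ℝ) (hτ : ∀ j, 0 < τ j)
    (hne : (marketFeas nb n m nl d plow pup Fptdf fbar φ w τ).Nonempty) :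
    ∃ xstar ∈ marketFeas nb n m nl d plow pup Fptdf fbar φ w τ,
      ∀ x ∈ marketFeas nb n m nl d plow pup Fptdf fbar φ w τ,
        0 ≤ fderiv ℝ (marketObj nb n m C S γ c cplus cminus s φ w) xstar
              (x - xstar) :=
  regression_equilibrium_exists_general C S γ c cplus cminus s d plow pup Fptdf fbar φ w τ hne
end
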